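/- arXiv:1905.02160 — 6 statements merged into one kernel-verified Lean document; each statement's English description precedes it below -/
import Mathlib

section
/- Let 𝒰 be a cofinite subsymmetric ultrafilter on FIN_{±k} with 𝒰 + (−T)^j 𝒰 = (−T)^j 𝒰 + 𝒰 = 𝒰 for all j ≤ k. For every r ∈ ℕ, r ≥ 1, and every Souslin measurable (with respect to the metrizable topology) colouring c : FIN_{±k}^[∞] → {0, …, r−1}, there exist i < r and a 𝒰-tree U with stem ∅ such that [U] ⊆ c⁻¹{i}. -/
open Function Set

/-- `p` is an element of `FIN_{±k}`: finitely supported, values in `{0, ±1, …, ±k}`,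
attaining one of the values `±k`. -/
def IsFin (k : ℕ) (p : ℕ → ℤ) : Prop :=
  (Function.support p).Finite ∧ (∀ n, |p n| ≤ (k : ℤ)) ∧ (∃ n, |p n| = (k : ℤ))

/-- `p < q` in the block ordering: every point of `supp p` precedes every point of `supp q`. -/
def BlockLt (p q : ℕ → ℤ) : Prop :=
  ∀ m n : ℕ, p m ≠ 0 → q n ≠ 0 → m < n

/-- The tetris operation `T`. -/
def tetris (p : ℕ → ℤ) : ℕ → ℤ := fun n =>
  if 0 < p n then p n - 1 else if p n < 0 then p n + 1 else 0

/-- The sign-flipped tetris operation `-T`. -/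
def negT (p : ℕ → ℤ) : ℕ → ℤ := -(tetris p)

/-- The weak tetris operation `S`. -/
def Sop (p : ℕ → ℤ) : ℕ → ℤ := fun n => if |p n| = 1 then 0 else p n

/-- `‖p‖ ≤ c` for the `ℓ∞` norm. -/
def normLe (p : ℕ → ℤ) (c : ℕ) : Prop := ∀ n, |p n| ≤ (c : ℤ)

/-- `(A)_c`, the `c`-fattening of `A`. -/
def approx (c : ℕ) (A : Set (ℕ → ℤ)) : Set (ℕ → ℤ) :=
  {p | ∃ q ∈ A, normLe (p - q) c}

/-- `P` is an infinite block sequence in `FIN_{±k}`. -/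
def IsBlockSeq (k : ℕ) (P : ℕ → ℕ → ℤ) : Prop :=
  (∀ n, IsFin k (P n)) ∧ ∀ m n : ℕ, m < n → BlockLt (P m) (P n)

/-- `t` is a finite block sequence in `FIN_{±k}` (coded as a list). -/
def IsFinBlockSeq (k : ℕ) (t : List (ℕ → ℤ)) : Prop :=
  (∀ p ∈ t, IsFin k p) ∧ t.Pairwise BlockLt

/-- `q ∈ ⟨P⟩_{±k}`: `q = ε₀T^{j₀}(p_{n₀}) + ⋯ + ε_m T^{j_m}(p_{n_m})` with `n₀ < ⋯ < n_m`,
`εᵢ ∈ {±1}`, `jᵢ < k` and `min jᵢ = 0`. -/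
def InSpanPM (k : ℕ) (P : ℕ → ℕ → ℤ) (q : ℕ → ℤ) : Prop :=
  ∃ (m : ℕ) (n : Fin (m + 1) → ℕ) (ε : Fin (m + 1) → ℤ) (j : Fin (m + 1) → ℕ),
    StrictMono n ∧ (∀ i, ε i = 1 ∨ ε i = -1) ∧ (∀ i, j i < k) ∧ (∃ i, j i = 0) ∧
    q = ∑ i, ε i • tetris^[j i] (P (n i))

/-- `q ∈ ⟨P⟩_{(−T)}`. -/
def InSpanNegT (k : ℕ) (P : ℕ → ℕ → ℤ) (q : ℕ → ℤ) : Prop :=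
  ∃ (m : ℕ) (n : Fin (m + 1) → ℕ) (j : Fin (m + 1) → ℕ),
    StrictMono n ∧ (∀ i, j i < k) ∧ (∃ i, j i = 0) ∧
    q = ∑ i, negT^[j i] (P (n i))

/-- `q ∈ ⟨p_a, …, p_b⟩_{(−T)}`. -/
def InSpanNegTRange (k : ℕ) (P : ℕ → ℕ → ℤ) (a b : ℕ) (q : ℕ → ℤ) : Prop :=
  ∃ (m : ℕ) (n : Fin (m + 1) → ℕ) (j : Fin (m + 1) → ℕ),
    StrictMono n ∧ (∀ i, a ≤ n i ∧ n i ≤ b) ∧ (∀ i, j i < k) ∧ (∃ i, j i = 0) ∧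
    q = ∑ i, negT^[j i] (P (n i))

/-- A cofinite ultrafilter on `FIN_{±k}` (coded as an ultrafilter on `ℕ → ℤ`
concentrating on `FIN_{±k}`). -/
def IsCofiniteUF (k : ℕ) (𝒰 : Ultrafilter (ℕ → ℤ)) : Prop :=
  {p | IsFin k p} ∈ 𝒰 ∧ ∀ m : ℕ, {p : ℕ → ℤ | ∀ n < m, p n = 0} ∈ 𝒰

/-- `A ∈ 𝒰 + 𝒱`. -/
def SumMem (𝒰 𝒱 : Ultrafilter (ℕ → ℤ)) (A : Set (ℕ → ℤ)) : Prop :=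
  {p | {q | BlockLt p q ∧ p + q ∈ A} ∈ 𝒱} ∈ 𝒰

/-- `𝒰` is subsymmetric: `A ∈ 𝒰` implies `−(A)₁ ∈ 𝒰`. -/
def IsSubsymmetric (𝒰 : Ultrafilter (ℕ → ℤ)) : Prop :=
  ∀ A ∈ 𝒰, {p : ℕ → ℤ | -p ∈ approx 1 A} ∈ 𝒰

/-- `𝒰 + (−T)^j 𝒰 = (−T)^j 𝒰 + 𝒰 = 𝒰` for all `j ≤ k`. -/
def IsIdempotentUF (k : ℕ) (𝒰 : Ultrafilter (ℕ → ℤ)) : Prop :=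
  ∀ j ≤ k, ∀ A : Set (ℕ → ℤ),
    (SumMem 𝒰 (Ultrafilter.map (negT^[j]) 𝒰) A ↔ A ∈ 𝒰) ∧
    (SumMem (Ultrafilter.map (negT^[j]) 𝒰) 𝒰 A ↔ A ∈ 𝒰)

/-- A cofinite subsymmetric ultrafilter on `FIN_{±k}` idempotent with respect to
all the maps `(−T)^j`, `j ≤ k`. -/
def IsGowersUF (k : ℕ) (𝒰 : Ultrafilter (ℕ → ℤ)) : Prop :=
  IsCofiniteUF k 𝒰 ∧ IsSubsymmetric 𝒰 ∧ IsIdempotentUF k 𝒰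

/-- A `𝒰`-tree on `FIN_{±k}` with stem `s`. -/
structure IsUTree (k : ℕ) (𝒰 : Ultrafilter (ℕ → ℤ)) (U : Set (List (ℕ → ℤ)))
    (s : List (ℕ → ℤ)) : Prop where
  blocks : ∀ t ∈ U, IsFinBlockSeq k t
  prefixClosed : ∀ t ∈ U, ∀ t' : List (ℕ → ℤ), t' <+: t → t' ∈ U
  stemMem : s ∈ U
  stemComparable : ∀ t ∈ U, s <+: t ∨ t <+: s
  branch : ∀ t ∈ U, s <+: t → {p | t ++ [p] ∈ U} ∈ 𝒰

/-- `[U]`, the set of infinite branches of a tree of finite block sequences. -/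
def Branches (U : Set (List (ℕ → ℤ))) : Set (ℕ → ℕ → ℤ) :=
  {P | ∀ n : ℕ, (List.ofFn fun i : Fin n => P i.1) ∈ U}

/-- The space `FIN_{±k}^[∞]` of infinite block sequences. -/
def BlockSeq (k : ℕ) : Type := {P : ℕ → ℕ → ℤ // IsBlockSeq k P}

/-- The metrizable topology on `FIN_{±k}^[∞]`, generated by the basic sets `[s]`. -/
instance BlockSeq.topology (k : ℕ) : TopologicalSpace (BlockSeq k) :=
  TopologicalSpace.generateFrom
    {O | ∃ s : List (ℕ → ℤ),
      O = {P : BlockSeq k | ∀ i : Fin s.length, P.1 i.1 = s.get i}}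

/-- The Souslin operation applied to a Souslin scheme. -/
def SouslinOp {α : Type*} (F : List ℕ → Set α) : Set α :=
  ⋃ x : ℕ → ℕ, ⋂ n : ℕ, F (List.ofFn fun i : Fin n => x i.1)

/-- `A` is Souslin measurable: it belongs to every field of sets containing the open
sets and closed under the Souslin operation. -/
def SouslinMeasurable {α : Type*} [TopologicalSpace α] (A : Set α) : Prop :=
  ∀ 𝓕 : Set (Set α),
    (∀ O : Set α, IsOpen O → O ∈ 𝓕) →
    (∀ B ∈ 𝓕, Bᶜ ∈ 𝓕) →
    (∀ B ∈ 𝓕, ∀ C ∈ 𝓕, B ∪ C ∈ 𝓕) →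
    (∀ F : List ℕ → Set α, (∀ s, F s ∈ 𝓕) → SouslinOp F ∈ 𝓕) →
    A ∈ 𝓕

/-- The map `Φ_m : FIN_{±2m} → FIN_{±m}` (its defining formula does not depend on `m`). -/
def Phi (p : ℕ → ℤ) : ℕ → ℤ := fun n =>
  if p n % 2 = 0 then p n / 2
  else if 0 < p n then (p n - 1) / 2
  else (p n + 1) / 2

/-- `Ψ = Φ_k ∘ Φ_{2k} : FIN_{±4k} → FIN_{±k}`. -/
def Psi (p : ℕ → ℤ) : ℕ → ℤ := Phi (Phi p)

namespace UTreeRamsey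

/-- initial segment of length `n` -/
def pre {β : Type*} (x : ℕ → β) (n : ℕ) : List β := List.ofFn fun i : Fin n => x i.1

section general
variable {α X : Type*}

theorem pre_length (x : ℕ → α) (n : ℕ) : (pre x n).length = n := by simp [pre]

theorem pre_succ (x : ℕ → α) (n : ℕ) : pre x (n + 1) = pre x n ++ [x n] := by
  rw [pre, List.ofFn_succ', List.concat_eq_append]
  rfl

theorem pre_eq_iff (x y : ℕ → α) (n : ℕ) : pre x n = pre y n ↔ ∀ i < n, x i = y i := by
  unfold pre
  rw [List.ofFn_inj, funext_iff]
  exact ⟨fun h i hi => h ⟨i, hi⟩, fun h i => h i.1 i.2⟩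

theorem pre_take (x : ℕ → α) {m n : ℕ} (h : m ≤ n) : (pre x n).take m = pre x m := by
  induction n, h using Nat.le_induction with
  | base => rw [List.take_of_length_le]; rw [pre_length]
  | succ n hmn ih => rw [pre_succ, List.take_append_of_le_length (by rw [pre_length]; exact hmn), ih]

variable (𝒰 : Ultrafilter α) (e : X → ℕ → α)

/-- there is a `𝒰`-tree with stem `s` (coded by its branching function) with branches in `B` -/
def Ev (s : List α) (B : Set X) : Prop :=
  ∃ g : List α → Set α, (∀ t, g t ∈ 𝒰) ∧ ∀ P : X, pre (e P) s.length = s →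
    (∀ n ≥ s.length, e P n ∈ g (pre (e P) n)) → P ∈ B

def Con (B : Set X) : Prop := ∀ s, Ev 𝒰 e s B

def Ram (B : Set X) : Prop := ∀ s, Ev 𝒰 e s B ∨ Ev 𝒰 e s Bᶜ

variable {𝒰 e}

theorem Ev.mono {s : List α} {B C : Set X} (h : Ev 𝒰 e s B) (hBC : ∀ P ∈ B, P ∈ C) :
    Ev 𝒰 e s C := by
  obtain ⟨g, hg, h⟩ := h
  exact ⟨g, hg, fun P h1 h2 => hBC _ (h P h1 h2)⟩

theorem Ev.inter {s : List α} {B C : Set X} (h : Ev 𝒰 e s B) (h' : Ev 𝒰 e s C) :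
    Ev 𝒰 e s (B ∩ C) := by
  obtain ⟨g, hg, h⟩ := h
  obtain ⟨g', hg', h'⟩ := h'
  exact ⟨fun t => g t ∩ g' t, fun t => Filter.inter_mem (hg t) (hg' t), fun P h1 h2 =>
    ⟨h P h1 fun n hn => (h2 n hn).1, h' P h1 fun n hn => (h2 n hn).2⟩⟩

theorem Ev.univ (s : List α) : Ev 𝒰 e s Set.univ :=
  ⟨fun _ => Set.univ, fun _ => Filter.univ_mem, fun _ _ _ => trivial⟩

theorem Ev.mp {s : List α} {B C : Set X} (h : Ev 𝒰 e s B) (h' : Ev 𝒰 e s {P | P ∈ B → P ∈ C}) :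
    Ev 𝒰 e s C := (h.inter h').mono fun _ hP => hP.2 hP.1

theorem Ev.glue {s : List α} {B : Set X} (h : {p | Ev 𝒰 e (s ++ [p]) B} ∈ 𝒰) :
    Ev 𝒰 e s B := by
  classical
  have H : ∀ u, ∃ g : List α → Set α, (∀ t, g t ∈ 𝒰) ∧ (Ev 𝒰 e u B → 
      ∀ P : X, pre (e P) u.length = u →
        (∀ n ≥ u.length, e P n ∈ g (pre (e P) n)) → P ∈ B) := by
    intro u
    by_cases hu : Ev 𝒰 e u B
    · obtain ⟨g, hg, h⟩ := hu
      exact ⟨g, hg, fun _ => h⟩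
    · exact ⟨fun _ => Set.univ, fun _ => Filter.univ_mem, fun h => absurd h hu⟩
  choose G hG hG' using H
  refine ⟨fun t => {p | t = s → Ev 𝒰 e (s ++ [p]) B} ∩ G (t.take (s.length + 1)) t, fun t => 
    Filter.inter_mem ?_ (hG _ _), ?_⟩
  · exact Filter.mem_of_superset h fun p hp _ => hp
  · intro P h1 h2
    have h3 := (h2 s.length le_rfl).1 h1
    have h4 : pre (e P) (s.length + 1) = s ++ [e P s.length] := by rw [pre_succ, h1]
    refine hG' _ h3 P (by simpa using h4) ?_
    intro n hn
    have hn' : s.length + 1 ≤ n := by simpa using hn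
    have := (h2 n (by omega)).2
    rwa [pre_take _ hn', h4] at this

theorem Con.iInter {B : ℕ → Set X} (h : ∀ n, Con 𝒰 e (B n)) : Con 𝒰 e (⋂ n, B n) := by
  intro s
  choose G hG hG' using h
  refine ⟨fun t => ⋂ n ∈ Finset.range (t.length + 1), ⋂ m ∈ Finset.range (t.length + 1),
    G n (t.take m) t, fun t => ?_, ?_⟩
  · refine (Filter.biInter_finset_mem _).2 fun n _ => (Filter.biInter_finset_mem _).2 fun m _ => 
      hG _ _ _
  · intro P h1 h2
    rw [Set.mem_iInter]
    intro n
    have key : ∀ m ≥ max s.length n, e P m ∈ G n (pre (e P) (max s.length n)) (pre (e P) m) := by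
      intro m hm
      have := h2 m (le_trans (le_max_left _ _) hm)
      simp only [Set.mem_iInter, Finset.mem_range, pre_length] at this
      have h5 := this n (by have := le_max_right s.length n; omega) (max s.length n) (by omega)
      rwa [pre_take _ hm] at h5
    refine hG' n (pre (e P) (max s.length n)) P (by rw [pre_length]) ?_
    rw [pre_length]
    exact key

theorem Ev.prop {s : List α} {B : Set X} (h : Ev 𝒰 e s B) :
    Ev 𝒰 e s {P | ∀ n ≥ s.length, Ev 𝒰 e (pre (e P) n) B} := by
  obtain ⟨g, hg, h⟩ := h
  refine ⟨g, hg, fun P h1 h2 n hn => ⟨g, hg, fun Q h3 h4 => ?_⟩⟩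
  rw [pre_length] at h3 h4
  have h5 := (pre_eq_iff _ _ _).1 h3
  have h6 : ∀ m ≤ n, pre (e Q) m = pre (e P) m := fun m hm =>
    (pre_eq_iff _ _ _).2 fun i hi => h5 i (by omega)
  refine h Q ((h6 _ hn).trans h1) fun m hm => ?_
  by_cases hmn : m < n
  · rw [h6 m hmn.le, h5 m hmn]; exact h2 m hm
  · exact h4 m (by omega)

theorem Ev.prop_not {s : List α} {B : Set X} (h : ¬ Ev 𝒰 e s B) :
    Ev 𝒰 e s {P | ∀ n ≥ s.length, ¬ Ev 𝒰 e (pre (e P) n) B} := by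
  refine ⟨fun t => {p | ¬ Ev 𝒰 e t B → ¬ Ev 𝒰 e (t ++ [p]) B}, fun t => ?_, ?_⟩
  · by_cases ht : Ev 𝒰 e t B
    · exact Filter.mem_of_superset Filter.univ_mem fun p _ h => absurd ht h
    · have : {p | Ev 𝒰 e (t ++ [p]) B} ∉ 𝒰 := fun h' => ht (Ev.glue h')
      exact Filter.mem_of_superset (Ultrafilter.compl_mem_iff_notMem.2 this) fun p hp _ => hp
  · intro P h1 h2 n hn
    induction n, hn using Nat.le_induction with
    | base => rwa [h1]
    | succ n hn ih => rw [pre_succ]; exact h2 n hn ih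

variable (𝒰 e) in
def Ker (B : Set X) : Set X := {P | ∃ N, ∀ n ≥ N, Ev 𝒰 e (pre (e P) n) B}

theorem ev_ker {s : List α} {B : Set X} (h : Ev 𝒰 e s B) : Ev 𝒰 e s (Ker 𝒰 e B) :=
  h.prop.mono fun _ hP => ⟨_, hP⟩

theorem ev_ker_compl {s : List α} {B : Set X} (h : ¬ Ev 𝒰 e s B) : Ev 𝒰 e s (Ker 𝒰 e B)ᶜ :=
  (Ev.prop_not h).mono fun _ hP ⟨N, hN⟩ => 
    hP (max N s.length) (le_max_right _ _) (hN _ (le_max_left _ _))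

theorem ram_ker (B : Set X) : Ram 𝒰 e (Ker 𝒰 e B) := fun s => by
  by_cases h : Ev 𝒰 e s B
  · exact .inl (ev_ker h)
  · exact .inr (ev_ker_compl h)

theorem con_ker (B : Set X) : Con 𝒰 e {P | P ∈ Ker 𝒰 e B → P ∈ B} := fun s => by
  by_cases h : Ev 𝒰 e s B
  · exact h.mono fun _ h _ => h
  · exact (ev_ker_compl h).mono fun _ h h' => absurd h' h

theorem ker_max {B Z : Set X} (hZ : Ram 𝒰 e Z) (h : Con 𝒰 e {P | P ∈ Z → P ∈ B}) :
    Con 𝒰 e {P | P ∈ Z → P ∈ Ker 𝒰 e B} := fun s => by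
  rcases hZ s with h1 | h1
  · exact (ev_ker (h1.mp (h s))).mono fun _ h _ => h
  · exact h1.mono fun _ h h' => absurd h' h

theorem Con.and {B C : Set X} (h : Con 𝒰 e B) (h' : Con 𝒰 e C) : Con 𝒰 e (B ∩ C) :=
  fun s => (h s).inter (h' s)

theorem Con.mono {B C : Set X} (h : Con 𝒰 e B) (hBC : ∀ P ∈ B, P ∈ C) : Con 𝒰 e C :=
  fun s => (h s).mono hBC

theorem Con.of_all {B : Set X} (h : ∀ P, P ∈ B) : Con 𝒰 e B :=
  fun s => (Ev.univ s).mono fun P _ => h P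

theorem Ram.congr {B C : Set X} (h : Ram 𝒰 e B) (h1 : Con 𝒰 e {P | P ∈ B → P ∈ C})
    (h2 : Con 𝒰 e {P | P ∈ C → P ∈ B}) : Ram 𝒰 e C := fun s => by
  rcases h s with h | h
  · exact .inl (h.mp (h1 s))
  · exact .inr ((h.inter (h2 s)).mono fun _ hP h' => hP.1 (hP.2 h'))

theorem Ram.compl {B : Set X} (h : Ram 𝒰 e B) : Ram 𝒰 e Bᶜ := fun s => by
  rw [compl_compl]; exact (h s).symm

theorem Ram.iUnion {B : ℕ → Set X} (h : ∀ n, Ram 𝒰 e (B n)) : Ram 𝒰 e (⋃ n, B n) := by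
  refine (ram_ker (⋃ n, B n)).congr (con_ker _) ?_
  have : ∀ n, Con 𝒰 e {P | P ∈ B n → P ∈ Ker 𝒰 e (⋃ n, B n)} := fun n => 
    ker_max (h n) (Con.of_all fun P hP => Set.mem_iUnion.2 ⟨n, hP⟩)
  refine (Con.iInter this).mono fun P hP hP' => ?_
  obtain ⟨n, hn⟩ := Set.mem_iUnion.1 hP'
  exact Set.mem_iInter.1 hP n hn

theorem Ram.union {B C : Set X} (h : Ram 𝒰 e B) (h' : Ram 𝒰 e C) : Ram 𝒰 e (B ∪ C) := fun s => by
  rcases h s with h | h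
  · exact .inl (h.mono fun _ h => .inl h)
  rcases h' s with h' | h'
  · exact .inl (h'.mono fun _ h => .inr h)
  · exact .inr ((h.inter h').mono fun _ hP hP' => hP'.elim hP.1 hP.2)

theorem Ram.of_open {B : Set X}
    (h : ∀ P ∈ B, ∃ N, ∀ Q, pre (e Q) N = pre (e P) N → Q ∈ B) : Ram 𝒰 e B := by
  refine (ram_ker B).congr (con_ker _) (Con.of_all fun P hP => ?_)
  obtain ⟨N, hN⟩ := h P hP
  refine ⟨N, fun n hn => ⟨fun _ => Set.univ, fun _ => Filter.univ_mem, fun Q hQ _ => hN Q ?_⟩⟩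
  rw [pre_length] at hQ
  rw [← pre_take _ hn, hQ, pre_take _ hn]

theorem exists_branch {p : List ℕ → Prop} (h0 : p []) (h : ∀ σ, p σ → ∃ n, p (σ ++ [n])) :
    ∃ x : ℕ → ℕ, ∀ n, p (pre x n) := by
  have h' : ∀ σ, ∃ n, p σ → p (σ ++ [n]) := fun σ => by
    by_cases hσ : p σ
    · obtain ⟨n, hn⟩ := h σ hσ; exact ⟨n, fun _ => hn⟩
    · exact ⟨0, fun h => absurd h hσ⟩
  choose f hf using h'
  let L : ℕ → List ℕ := fun n => Nat.rec [] (fun _ l => l ++ [f l]) n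
  have hL : ∀ n, pre (fun n => f (L n)) n = L n := by
    intro n
    induction n with
    | zero => simp [pre, L]
    | succ n ih => rw [pre_succ, ih]
  refine ⟨fun n => f (L n), fun n => ?_⟩
  rw [hL]
  induction n with
  | zero => exact h0
  | succ n ih => exact hf _ ih

theorem Ram.souslin {F : List ℕ → Set X} (hF : ∀ σ, Ram 𝒰 e (F σ)) : Ram 𝒰 e (SouslinOp F) := by
  let A : List ℕ → Set X := fun σ => 
    {P | ∃ x : ℕ → ℕ, pre x σ.length = σ ∧ ∀ n, P ∈ F (pre x n)}
  let E : List ℕ → Set X := fun σ => (Ker 𝒰 e (A σ)ᶜ)ᶜ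
  have hE : ∀ σ, Ram 𝒰 e (E σ) := fun σ => (ram_ker _).compl
  have hAE : ∀ σ, Con 𝒰 e {P | P ∈ A σ → P ∈ E σ} := fun σ => 
    (con_ker (A σ)ᶜ).mono fun P hP h1 h2 => hP h2 h1
  have hmin : ∀ σ Z, Ram 𝒰 e Z → Con 𝒰 e {P | P ∈ A σ → P ∈ Z} →
      Con 𝒰 e {P | P ∈ E σ → P ∈ Z} := fun σ Z hZ h => by
    have := ker_max (B := (A σ)ᶜ) hZ.compl (h.mono fun P hP h1 h2 => h1 (hP h2))
    exact this.mono fun P hP h1 => by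
      by_contra h2
      exact h1 (hP h2)
  have hA : SouslinOp F = A [] := by
    ext P
    simp [SouslinOp, A, pre]
  have h1 : ∀ σ, Con 𝒰 e {P | P ∈ E σ → P ∈ F σ} := fun σ => by
    refine hmin σ _ (hF σ) (Con.of_all ?_)
    rintro P ⟨x, hx, h⟩
    rw [← hx]; exact h _
  have h2 : ∀ σ, Con 𝒰 e {P | P ∈ E σ → P ∈ ⋃ n, E (σ ++ [n])} := fun σ => by
    refine hmin σ _ (Ram.iUnion fun n => hE _) ?_
    refine (Con.iInter fun n => hAE (σ ++ [n])).mono fun P hP hPA => ?_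
    obtain ⟨x, hx, h⟩ := hPA
    refine Set.mem_iUnion.2 ⟨x σ.length, Set.mem_iInter.1 hP _ ⟨x, ?_, h⟩⟩
    simp only [List.length_append, List.length_cons, List.length_nil, zero_add]
    rw [pre_succ, hx]
  have h3 : Con 𝒰 e {P | ∀ σ, P ∈ E σ → P ∈ F σ ∧ ∃ n, P ∈ E (σ ++ [n])} := by
    have := Con.iInter (𝒰 := 𝒰) (e := e) (fun n => 
      (h1 (Denumerable.ofNat (List ℕ) n)).and (h2 (Denumerable.ofNat (List ℕ) n)))
    refine this.mono fun P hP σ hσ => ?_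
    have h4 := Set.mem_iInter.1 hP (Encodable.encode σ)
    rw [Denumerable.ofNat_encode] at h4
    exact ⟨h4.1 hσ, Set.mem_iUnion.1 (h4.2 hσ)⟩
  rw [hA]
  refine (hE []).congr (h3.mono fun P hP hP0 => ?_) (hAE [])
  obtain ⟨x, hx⟩ := exists_branch (p := fun σ => P ∈ E σ) hP0 fun σ hσ => (hP σ hσ).2
  exact ⟨x, by simp [pre], fun n => (hP _ (hx n)).1⟩

end general

theorem ram_isOpen {k : ℕ} (𝒰 : Ultrafilter (ℕ → ℤ)) {O : Set (BlockSeq k)} (hO : IsOpen O) :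
    Ram 𝒰 (fun P : BlockSeq k => P.1) O := by
  apply Ram.of_open
  have hO' : TopologicalSpace.GenerateOpen {O | ∃ s : List (ℕ → ℤ),
      O = {P : BlockSeq k | ∀ i : Fin s.length, P.1 i.1 = s.get i}} O := hO
  induction hO' with
  | basic O h =>
    obtain ⟨s, rfl⟩ := h
    intro P hP
    refine ⟨s.length, fun Q hQ i => ?_⟩
    rw [(pre_eq_iff _ _ _).1 hQ i.1 i.2]
    exact hP i
  | univ => exact fun _ _ => ⟨0, fun _ _ => trivial⟩
  | inter A B hA hB ihA ihB =>
    rintro P ⟨h1, h2⟩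
    obtain ⟨N, hN⟩ := ihA hA P h1
    obtain ⟨M, hM⟩ := ihB hB P h2
    refine ⟨max N M, fun Q hQ => ?_⟩
    rw [pre_eq_iff] at hQ
    exact ⟨hN Q ((pre_eq_iff _ _ _).2 fun i hi => hQ i (lt_max_of_lt_left hi)),
      hM Q ((pre_eq_iff _ _ _).2 fun i hi => hQ i (lt_max_of_lt_right hi))⟩
  | sUnion S hS ih =>
    rintro P ⟨A, hA, hP⟩
    obtain ⟨N, hN⟩ := ih A hA (hS A hA) P hP
    exact ⟨N, fun Q hQ => ⟨A, hA, hN Q hQ⟩⟩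

theorem ram_souslinMeasurable {k : ℕ} (𝒰 : Ultrafilter (ℕ → ℤ)) {A : Set (BlockSeq k)}
    (hA : SouslinMeasurable A) : Ram 𝒰 (fun P : BlockSeq k => P.1) A :=
  hA {B | Ram 𝒰 (fun P : BlockSeq k => P.1) B} (fun _ h => ram_isOpen 𝒰 h)
    (fun _ h => Ram.compl h) (fun _ h _ h' => Ram.union h h') (fun _ h => Ram.souslin h)

theorem blockSeq_snoc_mem {k : ℕ} {𝒰 : Ultrafilter (ℕ → ℤ)} (h : IsCofiniteUF k 𝒰)
    {t : List (ℕ → ℤ)} (ht : IsFinBlockSeq k t) : {p | IsFinBlockSeq k (t ++ [p])} ∈ 𝒰 := by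
  have hN : ∃ N : ℕ, ∀ p ∈ t, ∀ m, p m ≠ 0 → m < N := by
    have hfin : (⋃ p ∈ {p | p ∈ t}, Function.support p).Finite :=
      Set.Finite.biUnion (List.finite_toSet t) fun p hp => (ht.1 p hp).1
    obtain ⟨N, hN⟩ := hfin.bddAbove
    refine ⟨N + 1, fun p hp m hm => Nat.lt_succ_of_le (hN ?_)⟩
    exact Set.mem_biUnion (show p ∈ {p | p ∈ t} from hp) hm
  obtain ⟨N, hN⟩ := hN
  filter_upwards [h.1, h.2 N] with p hp hp'
  refine ⟨fun q hq => ?_, ?_⟩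
  · rcases List.mem_append.1 hq with hq | hq
    · exact ht.1 q hq
    · rw [List.mem_singleton.1 hq]; exact hp
  · refine List.pairwise_append.2 ⟨ht.2, List.pairwise_singleton _ _, fun a ha b hb m n hm hn => ?_⟩
    rw [List.mem_singleton.1 hb] at hn
    refine lt_of_lt_of_le (hN a ha m hm) ?_
    by_contra hlt
    exact hn (hp' n (by omega))

theorem exists_UTree {k : ℕ} {𝒰 : Ultrafilter (ℕ → ℤ)} (h : IsCofiniteUF k 𝒰)
    {B : Set (BlockSeq k)} (hB : Ev 𝒰 (fun P : BlockSeq k => P.1) [] B) :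
    ∃ U : Set (List (ℕ → ℤ)), IsUTree k 𝒰 U [] ∧ ∀ P : BlockSeq k, P.1 ∈ Branches U → P ∈ B := by
  obtain ⟨g, hg, hB⟩ := hB
  refine ⟨{t | IsFinBlockSeq k t ∧ ∀ u p, u ++ [p] <+: t → p ∈ g u}, ⟨fun t ht => ht.1, ?_, ?_,
    fun t _ => .inl List.nil_prefix, ?_⟩, ?_⟩
  · rintro t ⟨h1, h2⟩ t' ht'
    exact ⟨⟨fun p hp => h1.1 p (ht'.subset hp), h1.2.sublist ht'.sublist⟩,
      fun u p hu => h2 u p (hu.trans ht')⟩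
  · exact ⟨⟨by simp, List.Pairwise.nil⟩, fun u p hu => by simp at hu⟩
  · rintro t ⟨h1, h2⟩ -
    filter_upwards [blockSeq_snoc_mem h h1, hg t] with p hp hp'
    refine ⟨hp, fun u q hu => ?_⟩
    rcases List.prefix_concat_iff.1 hu with hu | hu
    · obtain ⟨rfl, hq⟩ := List.append_inj' hu rfl
      rw [List.singleton_inj.1 hq]; exact hp'
    · exact h2 u q hu
  · intro P hP
    refine hB P (by simp [pre]) fun n _ => ?_
    have := (hP (n + 1)).2 (pre P.1 n) (P.1 n)
    exact this (by rw [← pre_succ]; exact List.prefix_rfl)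

end UTreeRamsey

/-- for every Souslin measurable colouring `c : FIN_{±k}^[∞] → r`
(metrizable topology) there are `i < r` and a `𝒰`-tree `U` with stem `∅` such that
`[U] ⊆ c⁻¹{i}`. -/
theorem souslin_measurable_UTree (k : ℕ) (hk : 1 ≤ k) (𝒰 : Ultrafilter (ℕ → ℤ))
    (h𝒰 : IsGowersUF k 𝒰) (r : ℕ) (hr : 1 ≤ r) (c : BlockSeq k → Fin r)
    (hc : ∀ i : Fin r, SouslinMeasurable (c ⁻¹' {i})) :
    ∃ (i : Fin r) (U : Set (List (ℕ → ℤ))), IsUTree k 𝒰 U [] ∧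
      ∀ P : BlockSeq k, P.1 ∈ Branches U → c P = i := by
  have key : ∃ i, UTreeRamsey.Ev 𝒰 (fun P : BlockSeq k => P.1) [] (c ⁻¹' {i}) := by
    by_contra hno
    push Not at hno
    have h1 : ∀ i, UTreeRamsey.Ev 𝒰 (fun P : BlockSeq k => P.1) [] (c ⁻¹' {i})ᶜ := fun i =>
      (UTreeRamsey.ram_souslinMeasurable 𝒰 (hc i) []).resolve_left (hno i)
    have h2 : ∀ S : Finset (Fin r), UTreeRamsey.Ev 𝒰 (fun P : BlockSeq k => P.1) []
        {P | c P ∉ S} := by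
      intro S
      induction S using Finset.induction_on with
      | empty => exact (UTreeRamsey.Ev.univ []).mono fun P _ => by simp
      | insert a S _ ih =>
        refine ((h1 a).inter ih).mono fun P hP => ?_
        have h3 : c P ≠ a := hP.1
        have h4 : c P ∉ S := hP.2
        simp [h3, h4]
    exact hno ⟨0, hr⟩ ((h2 Finset.univ).mono fun P hP => absurd (Finset.mem_univ _) hP)
  obtain ⟨i, hi⟩ := key
  obtain ⟨U, hU, hU'⟩ := UTreeRamsey.exists_UTree h𝒰.1 hi
  exact ⟨i, U, hU, fun P hP => hU' P hP⟩
end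

section
/- Let 𝒰 be a cofinite subsymmetric ultrafilter on FIN_{±k} with 𝒰 + (−T)^j 𝒰 = (−T)^j 𝒰 + 𝒰 = 𝒰 for all j ≤ k, and let U be a 𝒰-tree with stem ∅. Then there is an infinite block sequence P = (p_n)_{n<ω} in FIN_{±k} such that every infinite block sequence Q with Q ≤_{(−T)} P belongs to [U]. -/
open Function Set

theorem negT_iter_apply (j : ℕ) : ∀ (p : ℕ → ℤ) (n : ℕ), |(negT^[j] p) n| = max (|p n| - j) 0 := by
  induction j with
  | zero => intro p n; simp
  | succ j ih =>
    intro p n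
    rw [Function.iterate_succ_apply, ih]
    have h : |negT p n| = max (|p n| - 1) 0 := by
      simp only [negT, tetris, Pi.neg_apply]
      split_ifs <;> simp only [abs_eq_max_neg] <;> omega
    rw [h]
    push_cast
    grind

def Disj (p q : ℕ → ℤ) : Prop := ∀ n, p n = 0 ∨ q n = 0

theorem negT_iter_add (j : ℕ) : ∀ (p q : ℕ → ℤ), Disj p q →
    negT^[j] (p + q) = negT^[j] p + negT^[j] q := by
  induction j with
  | zero => intro p q _; simp
  | succ j ih =>
    intro p q h
    rw [Function.iterate_succ_apply, Function.iterate_succ_apply, Function.iterate_succ_apply]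
    rw [← ih]
    · congr 1
      funext n
      simp only [negT, tetris, Pi.neg_apply, Pi.add_apply]
      rcases h n with h | h <;> simp [h]
    · intro n
      simp only [negT, tetris, Pi.neg_apply]
      rcases h n with h | h <;> simp [h]

theorem BlockLt.disj {p q : ℕ → ℤ} (h : BlockLt p q) : Disj p q := by
  intro n
  by_contra hc
  push Not at hc
  exact lt_irrefl _ (h n n hc.1 hc.2)

theorem negT_iter_k {k : ℕ} {p : ℕ → ℤ} (hp : IsFin k p) : negT^[k] p = 0 := by
  funext n
  have := negT_iter_apply k p n
  have h2 := hp.2.1 n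
  rw [max_eq_right (by omega)] at this
  simpa using this

/-- combination of levels -/
theorem ev_combine {k : ℕ} {𝒰 : Ultrafilter (ℕ → ℤ)} (h : IsIdempotentUF k 𝒰)
    (A : Set (ℕ → ℤ)) (i j : ℕ) (hi : i ≤ k) (hj : j ≤ k)
    (hA : ∀ᶠ q in (𝒰 : Filter (ℕ → ℤ)), negT^[min i j] q ∈ A) :
    ∀ᶠ q in (𝒰 : Filter (ℕ → ℤ)), ∀ᶠ r in (𝒰 : Filter (ℕ → ℤ)),
      negT^[i] q + negT^[j] r ∈ A := by
  rcases le_total i j with hij | hij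
  · obtain ⟨d, rfl⟩ := Nat.exists_eq_add_of_le hij
    rw [min_eq_left hij] at hA
    have h1 : SumMem _ _ _ := (h d (by omega) {q | negT^[i] q ∈ A}).1.2 hA
    have h2 : ∀ᶠ q in (𝒰 : Filter (ℕ → ℤ)), ∀ᶠ r in (𝒰 : Filter (ℕ → ℤ)),
      BlockLt q (negT^[d] r) ∧ q + negT^[d] r ∈ {q | negT^[i] q ∈ A} := h1
    filter_upwards [h2] with q hq
    filter_upwards [hq] with r hr
    have := hr.2
    rw [negT_iter_add _ _ _ hr.1.disj, ← Function.iterate_add_apply] at this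
    exact this
  · obtain ⟨d, rfl⟩ := Nat.exists_eq_add_of_le hij
    rw [min_eq_right hij] at hA
    have h1 : SumMem _ _ _ := (h d (by omega) {q | negT^[j] q ∈ A}).2.2 hA
    have h2 : ∀ᶠ q in (𝒰 : Filter (ℕ → ℤ)), ∀ᶠ r in (𝒰 : Filter (ℕ → ℤ)),
      BlockLt (negT^[d] q) r ∧ negT^[d] q + r ∈ {q | negT^[j] q ∈ A} := h1
    filter_upwards [h2] with q hq
    filter_upwards [hq] with r hr
    have := hr.2
    rw [negT_iter_add _ _ _ hr.1.disj, ← Function.iterate_add_apply] at this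
    exact this

abbrev St := List (ℕ → ℤ) × (ℕ → ℤ) × ℕ

def GoodSt (k : ℕ) (𝒰 : Ultrafilter (ℕ → ℤ)) (U : Set (List (ℕ → ℤ))) (s : St) : Prop :=
  s.1 ∈ U ∧ (s.2.2 = 0 → s.1 ++ [s.2.1] ∈ U) ∧
    ∀ j ≤ k, min s.2.2 j = 0 →
      ∀ᶠ q in (𝒰 : Filter (ℕ → ℤ)), s.1 ++ [s.2.1 + negT^[j] q] ∈ U

def extSt (p : ℕ → ℤ) (s : St) (j : ℕ) : St := (s.1, s.2.1 + negT^[j] p, min s.2.2 j)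

def closeSt (k : ℕ) (s : St) : St := if s.2.2 = 0 then (s.1 ++ [s.2.1], 0, k) else s

theorem good_ext {k : ℕ} {𝒰 : Ultrafilter (ℕ → ℤ)} (h : IsIdempotentUF k 𝒰)
    {U : Set (List (ℕ → ℤ))} {s : St} (hs : GoodSt k 𝒰 U s) (j : ℕ) (hj : j ≤ k) :
    ∀ᶠ p in (𝒰 : Filter (ℕ → ℤ)), GoodSt k 𝒰 U (extSt p s j) := by
  have key : ∀ j' ∈ Set.Iic k, ∀ᶠ p in (𝒰 : Filter (ℕ → ℤ)), min (min s.2.2 j) j' = 0 →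
      ∀ᶠ q in (𝒰 : Filter (ℕ → ℤ)), s.1 ++ [(s.2.1 + negT^[j] p) + negT^[j'] q] ∈ U := by
    intro j' hj'
    by_cases hm : min (min s.2.2 j) j' = 0
    · have := ev_combine h {r | s.1 ++ [s.2.1 + r] ∈ U} j j' hj hj'
        (hs.2.2 (min j j') (le_trans (min_le_left _ _) hj) (by rw [← min_assoc]; exact hm))
      filter_upwards [this] with p hp _
      filter_upwards [hp] with q hq
      rw [add_assoc]; exact hq
    · exact Filter.Eventually.of_forall fun p hp => absurd hp hm
  have h1 : ∀ᶠ p in (𝒰 : Filter (ℕ → ℤ)), min s.2.2 j = 0 →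
      s.1 ++ [s.2.1 + negT^[j] p] ∈ U := by
    by_cases hm : min s.2.2 j = 0
    · filter_upwards [hs.2.2 j hj hm] with p hp _ using hp
    · exact Filter.Eventually.of_forall fun p hp => absurd hp hm
  filter_upwards [h1, (Filter.eventually_all_finite (Set.finite_Iic k)).2 key] with p hp1 hp2
  exact ⟨hs.1, hp1, fun j' hj' => hp2 j' hj'⟩

theorem good_close {k : ℕ} (hk : 1 ≤ k) {𝒰 : Ultrafilter (ℕ → ℤ)}
    {U : Set (List (ℕ → ℤ))} (hU : IsUTree k 𝒰 U []) {t : List (ℕ → ℤ)} (ht : t ∈ U) :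
    GoodSt k 𝒰 U (t, 0, k) := by
  refine ⟨ht, fun h => ?_, fun j hj hm => ?_⟩
  · simp only at h; omega
  · have : j = 0 := by simp only at hm; omega
    subst this
    have := hU.branch t ht List.nil_prefix
    filter_upwards [this] with p hp
    simpa using hp

structure Stage (k : ℕ) (𝒰 : Ultrafilter (ℕ → ℤ)) (U : Set (List (ℕ → ℤ))) where
  S : Set St
  m : ℕ
  fin : S.Finite
  good : ∀ s ∈ S, GoodSt k 𝒰 U s

theorem pick {k : ℕ} (hk : 1 ≤ k) {𝒰 : Ultrafilter (ℕ → ℤ)} (h𝒰 : IsGowersUF k 𝒰)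
    {U : Set (List (ℕ → ℤ))} (hU : IsUTree k 𝒰 U []) (D : Stage k 𝒰 U) :
    ∃ (p : ℕ → ℤ) (E : Stage k 𝒰 U), IsFin k p ∧ (∀ n < D.m, p n = 0) ∧
      D.m ≤ E.m ∧ (∀ n, p n ≠ 0 → n < E.m) ∧
      (∀ s ∈ D.S, ∀ j ≤ k, extSt p s j ∈ E.S) ∧
      (∀ s ∈ D.S, ∀ j ≤ k, closeSt k (extSt p s j) ∈ E.S) := by
  obtain ⟨⟨hfin, hcof⟩, -, hid⟩ := h𝒰
  have h1 : ∀ᶠ p in (𝒰 : Filter (ℕ → ℤ)), ∀ s ∈ D.S, ∀ j ∈ Set.Iic k,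
      GoodSt k 𝒰 U (extSt p s j) :=
    (Filter.eventually_all_finite D.fin).2 fun s hs =>
      (Filter.eventually_all_finite (Set.finite_Iic k)).2 fun j hj =>
        good_ext hid (D.good s hs) j hj
  have h2 : ∀ᶠ p in (𝒰 : Filter (ℕ → ℤ)), IsFin k p := hfin
  have h3 : ∀ᶠ p in (𝒰 : Filter (ℕ → ℤ)), ∀ n < D.m, p n = 0 := hcof D.m
  obtain ⟨p, hp1, hp2, hp3⟩ := (h1.and (h2.and h3)).exists
  obtain ⟨b, hb⟩ := hp2.1.bddAbove
  have hgc : ∀ s, GoodSt k 𝒰 U s → GoodSt k 𝒰 U (closeSt k s) := by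
    intro s hs
    unfold closeSt
    split_ifs with h0
    · exact good_close hk hU (hs.2.1 h0)
    · exact hs
  let X : Set St := Set.image2 (extSt p) D.S (Set.Iic k)
  have hX : X.Finite := D.fin.image2 _ (Set.finite_Iic k)
  have hXg : ∀ s ∈ X, GoodSt k 𝒰 U s := by
    rintro _ ⟨s, hs, j, hj, rfl⟩
    exact hp1 s hs j hj
  refine ⟨p, ⟨X ∪ closeSt k '' X, max D.m (b + 1), hX.union (hX.image _), ?_⟩, hp2, hp3,
    le_max_left _ _, ?_, ?_, ?_⟩
  · rintro s (hs | ⟨s, hs, rfl⟩)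
    · exact hXg s hs
    · exact hgc _ (hXg s hs)
  · intro n hn
    have : n ≤ b := hb hn
    exact lt_of_lt_of_le (Nat.lt_succ_of_le this) (le_max_right _ _)
  · intro s hs j hj
    exact Or.inl ⟨s, hs, j, hj, rfl⟩
  · intro s hs j hj
    exact Or.inr ⟨_, ⟨s, hs, j, hj, rfl⟩, rfl⟩

theorem span_fun {k : ℕ} {P : ℕ → ℕ → ℤ} (hP : ∀ n, IsFin k (P n)) {q : ℕ → ℤ}
    (hq : InSpanNegT k P q) : ∃ (J : ℕ → ℕ) (b : ℕ), (∀ a, J a ≤ k) ∧ J b < k ∧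
      (∀ a, b < a → J a = k) ∧ (∃ a ≤ b, J a = 0) ∧
      q = ∑ a ∈ Finset.range (b + 1), negT^[J a] (P a) := by
  classical
  obtain ⟨m, n, j, hn, hj, ⟨i0, hi0⟩, rfl⟩ := hq
  let J : ℕ → ℕ := fun a => if h : ∃ i, n i = a then j h.choose else k
  have hJn : ∀ i, J (n i) = j i := by
    intro i
    have h : ∃ i', n i' = n i := ⟨i, rfl⟩
    simp only [J, dif_pos h]
    rw [hn.injective h.choose_spec]
  have hJk : ∀ a, (¬ ∃ i, n i = a) → J a = k := fun a h => by simp only [J, dif_neg h]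
  have hle : ∀ i, n i ≤ n (Fin.last m) := fun i => hn.monotone (Fin.le_last i)
  refine ⟨J, n (Fin.last m), ?_, ?_, ?_, ⟨n i0, hle _, by rw [hJn, hi0]⟩, ?_⟩
  · intro a
    by_cases h : ∃ i, n i = a
    · obtain ⟨i, rfl⟩ := h
      rw [hJn]; exact (hj i).le
    · exact (hJk a h).le
  · rw [hJn]; exact hj _
  · intro a ha
    apply hJk
    rintro ⟨i, rfl⟩
    exact absurd (hle i) (not_le.2 ha)
  · have e1 : ∑ i, negT^[j i] (P (n i)) =
        ∑ a ∈ Finset.univ.image n, negT^[J a] (P a) := by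
      rw [Finset.sum_image (fun x _ y _ h => hn.injective h)]
      exact Finset.sum_congr rfl fun i _ => by rw [hJn]
    rw [e1]
    apply Finset.sum_subset
    · intro a ha
      simp only [Finset.mem_image, Finset.mem_univ, true_and] at ha
      obtain ⟨i, rfl⟩ := ha
      exact Finset.mem_range.2 (Nat.lt_succ_of_le (hle i))
    · intro a _ ha
      rw [hJk a (by simpa using ha)]
      exact negT_iter_k (hP a)

/-- a point of a span element -/
theorem span_point {k : ℕ} {P : ℕ → ℕ → ℤ} (hP : IsBlockSeq k P) {J : ℕ → ℕ} {B a : ℕ}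
    (ha : a < B) (hJ : J a < k) {x : ℕ} (hx : |P a x| = k) :
    (∑ a ∈ Finset.range B, negT^[J a] (P a)) x ≠ 0 := by
  rw [Finset.sum_apply, Finset.sum_eq_single a]
  · intro h
    have := negT_iter_apply (J a) (P a) x
    rw [h, hx] at this
    simp at this
    omega
  · intro c _ hc
    have hPa : P a x ≠ 0 := by
      intro h; rw [h] at hx; simp at hx; omega
    have hPc : P c x = 0 := by
      by_contra h
      rcases lt_or_gt_of_ne hc with h' | h'
      · exact lt_irrefl _ (hP.2 _ _ h' x x h hPa)
      · exact lt_irrefl _ (hP.2 _ _ h' x x hPa h)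
    have := negT_iter_apply (J c) (P c) x
    rw [hPc] at this
    simpa using this
  · intro h; exact absurd (Finset.mem_range.2 ha) h

theorem UTree_block_sequence (k : ℕ) (hk : 1 ≤ k) (𝒰 : Ultrafilter (ℕ → ℤ))
    (h𝒰 : IsGowersUF k 𝒰) (U : Set (List (ℕ → ℤ))) (hU : IsUTree k 𝒰 U []) :
    ∃ P : ℕ → ℕ → ℤ, IsBlockSeq k P ∧
      ∀ Q : ℕ → ℕ → ℤ, IsBlockSeq k Q → (∀ n, InSpanNegT k P (Q n)) →
        Q ∈ Branches U := by
  choose p E hfin hzero hmle hsupp hext hclose using fun D => pick hk h𝒰 hU D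
  let D0 : Stage k 𝒰 U := ⟨{([], 0, k)}, 0, Set.finite_singleton _, by
    rintro s rfl
    exact good_close hk hU hU.stemMem⟩
  let D : ℕ → Stage k 𝒰 U := fun n => E^[n] D0
  have hD : ∀ n, D (n + 1) = E (D n) := fun n => Function.iterate_succ_apply' _ _ _
  let P : ℕ → ℕ → ℤ := fun n => p (D n)
  have hmono : Monotone fun n => (D n).m := monotone_nat_of_le_succ fun n => by
    rw [hD]; exact hmle _
  have hP : IsBlockSeq k P := by
    refine ⟨fun n => hfin _, fun m n hmn x y hx hy => ?_⟩
    have h1 : x < (D (m + 1)).m := by rw [hD]; exact hsupp _ _ hx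
    have h2 : (D (m + 1)).m ≤ (D n).m := hmono hmn
    by_contra hc
    exact hy (hzero (D n) y (by omega))
  refine ⟨P, hP, fun Q hQ hspan => ?_⟩
  choose J b hJk hJb hJgt hJ0 hsum using fun n => span_fun hP.1 (hspan n)
  have sep : ∀ m n, m < n → ∀ a ≤ b m, J n a = k := by
    intro m n hmn a ha
    by_contra hne
    have hlt : J n a < k := lt_of_le_of_ne (hJk n a) hne
    have hab : a ≤ b n := by
      by_contra hc
      exact hne (hJgt n a (not_le.1 hc))
    obtain ⟨x, hx⟩ := (hP.1 (b m)).2.2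
    obtain ⟨y, hy⟩ := (hP.1 a).2.2
    have nz : ∀ c z, |P c z| = (k : ℤ) → P c z ≠ 0 := by
      intro c z hz h; rw [h] at hz; simp at hz; omega
    have q1 : Q m x ≠ 0 := by
      rw [hsum m]; exact span_point hP (Nat.lt_succ_self _) (hJb m) hx
    rcases ha.lt_or_eq with h | h
    · have q2 : Q n y ≠ 0 := by
        rw [hsum n]; exact span_point hP (Nat.lt_succ_of_le hab) hlt hy
      have := hQ.2 m n hmn x y q1 q2
      have := hP.2 a (b m) h y x (nz _ _ hy) (nz _ _ hx)
      omega
    · subst h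
      have q2 : Q n x ≠ 0 := by
        rw [hsum n]; exact span_point hP (Nat.lt_succ_of_le hab) hlt hx
      exact lt_irrefl _ (hQ.2 m n hmn x x q1 q2)
  have main : ∀ N, ∃ M, ((List.ofFn fun i : Fin N => Q i.1), (0 : ℕ → ℤ), k) ∈ (D M).S ∧
      ∀ n ≥ N, ∀ a < M, J n a = k := by
    intro N
    induction N with
    | zero => exact ⟨0, by simp [D, D0], fun n _ a ha => absurd ha (Nat.not_lt_zero _)⟩
    | succ N ih =>
      obtain ⟨M, hM, hMk⟩ := ih
      set t := List.ofFn fun i : Fin N => Q i.1 with ht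
      have hMb : M ≤ b N := by
        by_contra hc
        have := hMk N le_rfl (b N) (not_le.1 hc)
        have := hJb N
        omega
      have walk : ∀ c, M ≤ c → ∃ l, (∀ a < c, J N a = 0 → l = 0) ∧
          (t, (∑ a ∈ Finset.range c, negT^[J N a] (P a)), l) ∈ (D c).S := by
        intro c hc
        induction c, hc using Nat.le_induction with
        | base =>
          refine ⟨k, fun a ha h => ?_, ?_⟩
          · rw [← hMk N le_rfl a ha, h]
          · rw [Finset.sum_eq_zero]
            · exact hM
            · intro a ha
              rw [hMk N le_rfl a (Finset.mem_range.1 ha)]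
              exact negT_iter_k (hP.1 a)
        | succ c hc ih =>
          obtain ⟨l, hl, hmem⟩ := ih
          refine ⟨min l (J N c), fun a ha h => ?_, ?_⟩
          · rcases (Nat.lt_succ_iff_lt_or_eq.1 ha) with h' | h'
            · rw [hl a h' h]; simp
            · rw [← h', h]; simp
          · rw [Finset.sum_range_succ, hD]
            exact hext (D c) _ hmem (J N c) (hJk N c)
      obtain ⟨l, hl, hmem⟩ := walk (b N) hMb
      refine ⟨b N + 1, ?_, fun n hn a ha => sep N n hn a (Nat.le_of_lt_succ ha)⟩
      have hc := hclose (D (b N)) _ hmem (J N (b N)) (hJk N _)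
      have hl0 : min l (J N (b N)) = 0 := by
        obtain ⟨a, ha, ha0⟩ := hJ0 N
        rcases ha.lt_or_eq with h | h
        · rw [hl a h ha0]; simp
        · rw [← h, ha0]; simp
      rw [hD]
      have he : closeSt k (extSt (p (D (b N)))
          (t, (∑ a ∈ Finset.range (b N), negT^[J N a] (P a)), l) (J N (b N))) =
          ((List.ofFn fun i : Fin (N + 1) => Q i.1), (0 : ℕ → ℤ), k) := by
        have h1 : (List.ofFn fun i : Fin (N + 1) => Q i.1) = t ++ [Q N] := by
          rw [List.ofFn_succ_last]; simp [ht]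
        rw [h1, hsum N, Finset.sum_range_succ]
        simp only [closeSt, extSt, hl0, if_true]
        rfl
      rw [he] at hc
      exact hc
  intro N
  obtain ⟨M, hM, -⟩ := main N
  exact ((D M).good _ hM).1
end

section
/- Let 𝒰 be a cofinite subsymmetric ultrafilter on FIN_{±k} with 𝒰 + (−T)^j 𝒰 = (−T)^j 𝒰 + 𝒰 = 𝒰 for all j ≤ k, and let U be an S-closed 𝒰-tree with stem(U) = ∅. Then there is an infinite block sequence P = (p_n)_{n<ω} in FIN_{±k} such that ⟨P⟩_{±k}^[∞] ⊆ ([U])₃. -/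
open Function Set

def tau (a : ℤ) : ℤ := if 0 < a then a - 1 else if a < 0 then a + 1 else 0
def nu (a : ℤ) : ℤ := - tau a

lemma tetris_iter (j : ℕ) (p : ℕ → ℤ) (x : ℕ) : tetris^[j] p x = tau^[j] (p x) := by
  induction j generalizing p with
  | zero => rfl
  | succ j ih => rw [iterate_succ_apply, iterate_succ_apply, ih]; rfl

lemma negT_iter (j : ℕ) (p : ℕ → ℤ) (x : ℕ) : negT^[j] p x = nu^[j] (p x) := by
  induction j generalizing p with
  | zero => rfl
  | succ j ih => rw [iterate_succ_apply, iterate_succ_apply, ih]; rfl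

lemma abs_tau_iter (j : ℕ) (a : ℤ) : |tau^[j] a| = max (|a| - j) 0 := by
  induction j generalizing a with
  | zero => simp
  | succ j ih =>
    rw [iterate_succ_apply, ih]
    have : |tau a| = max (|a| - 1) 0 := by unfold tau; grind
    rw [this]; push_cast; grind

lemma tau_neg (a : ℤ) : tau (-a) = - tau a := by unfold tau; grind

lemma nu_iter (j : ℕ) (a : ℤ) : nu^[j] a = (-1) ^ j * tau^[j] a := by
  induction j with
  | zero => simp
  | succ j ih =>
    rw [iterate_succ_apply', iterate_succ_apply', ih, nu]
    rcases neg_one_pow_eq_or ℤ j with h | h <;> rw [pow_succ, h] <;> simp [tau_neg]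

lemma tau_close (a : ℤ) : |a - tau a| ≤ 1 := by unfold tau; grind

lemma tau_top {k : ℕ} {a : ℤ} (h : |a| ≤ k) : tau^[k] a = 0 := by
  have := abs_tau_iter k a
  rw [← abs_eq_zero, this]; grind

lemma nu_top {k : ℕ} {a : ℤ} (h : |a| ≤ k) : nu^[k] a = 0 := by
  rw [nu_iter, tau_top h, mul_zero]

lemma nu_zero (l : ℕ) : nu^[l] 0 = 0 := by
  have : IsFixedPt nu 0 := rfl
  exact this.iterate l

/-- combination of the sequence coded by owner index `idx` and value `v`. -/
def blockComb (idx : ℕ → ℕ) (v : ℕ → ℤ) (j : ℕ → ℕ) : ℕ → ℤ := fun x => nu^[j (idx x)] (v x)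

lemma comp_mem (k : ℕ) (hk : 1 ≤ k) (P : ℕ → ℕ → ℤ) (idx : ℕ → ℕ) (v : ℕ → ℤ)
    (hP : ∀ m x, P m x = if idx x = m then v x else 0) (hv : ∀ x, |v x| ≤ k)
    (A : ℕ → Set (ℕ → ℤ)) (h0 : ∀ n, P n ∈ A n)
    (h1 : ∀ n, ∀ y ∈ A (n+1), ∀ l ≤ k, negT^[l] (P n) + y ∈ A n ∧ P n + negT^[l] y ∈ A n)
    (d : ℕ) : ∀ (a : ℕ) (j : ℕ → ℕ), (∀ m, j m ≤ k) → (∀ m, m < a ∨ a + d ≤ m → j m = k) →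
      (∃ m, j m = 0) → blockComb idx v j ∈ A a := by
  induction d with
  | zero =>
    rintro a j - h2 ⟨m, hm⟩
    have := h2 m (by omega)
    omega
  | succ d ih =>
    intro a j hj h2 h3
    have key : blockComb idx v j = negT^[j a] (P a) + blockComb idx v (update j a k) := by
      funext x
      simp only [Pi.add_apply, blockComb, negT_iter, hP]
      by_cases h : idx x = a
      · simp [h, nu_top (hv x)]
      · simp [h, nu_zero, update_of_ne h]
    have hj' : ∀ m, update j a k m ≤ k := by
      intro m; by_cases h : m = a
      · simp [h]
      · simp [update_of_ne h, hj m]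
    have h2' : ∀ m, m < a + 1 ∨ a + 1 + d ≤ m → update j a k m = k := by
      intro m hm; by_cases h : m = a
      · simp [h]
      · rw [update_of_ne h]; exact h2 m (by omega)
    rw [key]
    generalize hjj : update j a k = j' at *
    by_cases h4 : ∃ m, j' m = 0
    · exact (h1 a _ (ih (a+1) j' hj' h2' h4) (j a) (hj a)).1
    · have ha : j a = 0 := by
        obtain ⟨m, hm⟩ := h3
        by_cases h : m = a
        · rw [← h, hm]
        · exact absurd ⟨m, by rw [← hjj, update_of_ne h, hm]⟩ h4
      obtain ⟨m₀, hm₀⟩ : ∃ m₀, ∀ m, j' m₀ ≤ j' m := by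
        have := WellFounded.has_min (measure j').wf Set.univ ⟨0, trivial⟩
        obtain ⟨m, -, hm⟩ := this
        exact ⟨m, fun x => not_lt.1 (hm x trivial)⟩
      rw [ha]
      by_cases hl : j' m₀ = k
      · have : blockComb idx v j' = 0 := by
          funext x
          have := hm₀ (idx x)
          have h5 : j' (idx x) = k := le_antisymm (hj' _) (hl ▸ this)
          simp [blockComb, h5, nu_top (hv x)]
        rw [this]; simpa using h0 a
      · have hlt : j' m₀ < k := lt_of_le_of_ne (hj' _) hl
        have e : blockComb idx v j' =
            negT^[j' m₀] (blockComb idx v (fun m => if j' m = k then k else j' m - j' m₀)) := by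
          funext x
          rw [negT_iter]
          simp only [blockComb]
          split_ifs with h
          · rw [h, nu_top (hv x), nu_zero]
          · rw [← iterate_add_apply]; congr 1
            have := hm₀ (idx x); congr 1; omega
        rw [e]
        refine (h1 a _ (ih (a+1) _ ?_ ?_ ?_) _ (hj' m₀)).2
        · intro m; have := hj' m; split_ifs <;> omega
        · intro m hm; simp [h2' m hm]
        · exact ⟨m₀, by simp [hl]⟩

lemma span_rep (k : ℕ) (hk : 1 ≤ k) (P : ℕ → ℕ → ℤ) (idx : ℕ → ℕ) (v : ℕ → ℤ)
    (hP : ∀ m x, P m x = if idx x = m then v x else 0) (hv : ∀ x, |v x| ≤ k) (q : ℕ → ℤ)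
    (hq : InSpanPM k P q) :
    ∃ (a d : ℕ) (ε : ℕ → ℤ) (j : ℕ → ℕ), (∀ m, ε m = 1 ∨ ε m = -1) ∧ (∀ m, j m ≤ k) ∧
      (∀ m, m < a ∨ a + d ≤ m → j m = k) ∧ j a < k ∧ (∃ m, j m = 0) ∧
      ∀ x, q x = ε (idx x) * tau^[j (idx x)] (v x) := by
  obtain ⟨m, n, ε, j, hn, hε, hj, ⟨i0, hi0⟩, rfl⟩ := hq
  have E1 : ∀ i, extend n ε (fun _ => 1) (n i) = ε i := fun i => hn.injective.extend_apply _ _ i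
  have E2 : ∀ i, extend n j (fun _ => k) (n i) = j i := fun i => hn.injective.extend_apply _ _ i
  have E3 : ∀ N, (¬ ∃ i, n i = N) → extend n j (fun _ => k) N = k :=
    fun N h => extend_apply' _ _ _ h
  have E4 : ∀ N, (¬ ∃ i, n i = N) → extend n ε (fun _ => 1) N = 1 :=
    fun N h => extend_apply' _ _ _ h
  refine ⟨n 0, n (Fin.last m) + 1 - n 0, extend n ε (fun _ => 1), extend n j (fun _ => k),
    ?_, ?_, ?_, ?_, ⟨n i0, by rw [E2, hi0]⟩, ?_⟩
  · intro N; by_cases h : ∃ i, n i = N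
    · obtain ⟨i, rfl⟩ := h; rw [E1]; exact hε i
    · rw [E4 N h]; simp
  · intro N; by_cases h : ∃ i, n i = N
    · obtain ⟨i, rfl⟩ := h; rw [E2]; exact (hj i).le
    · rw [E3 N h]
  · intro N hN
    apply E3; rintro ⟨i, rfl⟩
    have := hn.monotone (Fin.zero_le i)
    have := hn.monotone (Fin.le_last i)
    omega
  · rw [E2]; exact hj 0
  · intro x
    simp only [Finset.sum_apply, Pi.smul_apply, smul_eq_mul, tetris_iter, hP]
    have tz : ∀ l, tau^[l] 0 = 0 := fun l => (show IsFixedPt tau 0 from rfl).iterate l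
    by_cases h : ∃ i, n i = idx x
    · obtain ⟨i, hi⟩ := h
      rw [Finset.sum_eq_single i]
      · rw [← hi, E1, E2, if_pos rfl]
      · intro b _ hb
        rw [if_neg, tz, mul_zero]
        rw [← hi]; exact fun h => hb (hn.injective h.symm)
      · simp
    · rw [E3 _ h, tau_top (hv x), mul_zero]
      apply Finset.sum_eq_zero
      intro i _
      rw [if_neg (fun e => h ⟨i, e.symm⟩), tz, mul_zero]

lemma approx_term (k : ℕ) (ε δ : ℤ) (hε : ε = 1 ∨ ε = -1) (hδ : δ = 1 ∨ δ = -1)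
    (j : ℕ) (hj : j ≤ k) :
    ∃ j' ≤ k, j ≤ j' ∧ (j = 0 → ε = δ → j' = 0) ∧ ∀ a : ℤ, |a| ≤ k →
      |δ * (ε * tau^[j] a) - nu^[j'] a| ≤ 1 ∧ (ε * tau^[j] a = 0 → nu^[j'] a = 0) := by
  by_cases h : δ * ε = (-1) ^ j
  · refine ⟨j, hj, le_rfl, fun h _ => h, fun a _ => ?_⟩
    rw [nu_iter, ← h, ← mul_assoc]
    refine ⟨by simp, fun h => by rw [mul_assoc, h, mul_zero]⟩
  · by_cases hjk : j = k
    · refine ⟨j, hj, le_rfl, fun h _ => h, fun a ha => ?_⟩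
      rw [hjk, nu_top ha, tau_top ha]; simp
    · refine ⟨j+1, by omega, by omega, ?_, fun a _ => ?_⟩
      · rintro rfl rfl
        rcases hε with rfl | rfl <;> simp at h
      · have h' : δ * ε = -(-1) ^ j := by
          rcases neg_one_pow_eq_or ℤ j with e | e <;> rw [e] at h ⊢ <;>
            rcases hε with rfl | rfl <;> rcases hδ with rfl | rfl <;> simp_all
        rw [nu_iter, ← mul_assoc, h', iterate_succ_apply', pow_succ]
        have := tau_close (tau^[j] a)
        constructor
        · rcases neg_one_pow_eq_or ℤ j with e | e <;> rw [e] <;> grind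
        · intro h0
          have : tau^[j] a = 0 := by rcases hε with rfl | rfl <;> simpa using h0
          rw [this]; simp [tau]

lemma finite_lists (k : ℕ) (hk : 1 ≤ k) (V : Set ℕ) (hV : V.Finite) :
    {t : List (ℕ → ℤ) | IsFinBlockSeq k t ∧ ∀ s ∈ t, ∀ x, s x ≠ 0 → x ∈ V}.Finite := by
  classical
  have hW : {f : ℕ → ℤ | IsFin k f ∧ ∀ x, f x ≠ 0 → x ∈ V}.Finite := by
    have : Finite V := hV
    have h1 : (Set.pi Set.univ (fun _ : V => Set.Icc (-(k:ℤ)) k)).Finite :=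
      Set.Finite.pi (fun _ => Set.finite_Icc _ _)
    refine (h1.image (fun g x => if h : x ∈ V then g ⟨x, h⟩ else 0)).subset ?_
    rintro f ⟨⟨-, hf, -⟩, hfV⟩
    refine ⟨fun x => f x, fun x _ => abs_le.1 (hf x), ?_⟩
    funext x
    by_cases h : x ∈ V
    · simp [h]
    · simp only [h, dite_false]; by_contra h'; exact h (hfV x (Ne.symm h'))
  set W := {f : ℕ → ℤ | IsFin k f ∧ ∀ x, f x ≠ 0 → x ∈ V} with hWd
  have : Fintype W := hW.fintype
  have h2 : {l : List W | l.Nodup}.Finite := by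
    refine (List.finite_length_le W (Fintype.card W)).subset ?_
    intro l hl
    exact List.Nodup.length_le_card hl
  refine (h2.image (List.map Subtype.val)).subset ?_
  rintro t ⟨⟨ht1, ht2⟩, ht3⟩
  have htW : ∀ s ∈ t, s ∈ W := fun s hs => ⟨ht1 s hs, ht3 s hs⟩
  have hnd : t.Nodup := by
    refine List.Pairwise.imp_of_mem ?_ ht2
    rintro a b ha _ hab rfl
    obtain ⟨n, hn⟩ := (ht1 a ha).2.2
    have hn0 : a n ≠ 0 := by intro h; rw [h] at hn; simp at hn; omega
    exact lt_irrefl _ (hab n n hn0 hn0)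
  refine ⟨t.attach.map (fun s => ⟨s.1, htW s.1 s.2⟩), ?_, ?_⟩
  · refine List.Nodup.map ?_ (List.nodup_attach.2 hnd)
    intro a b h; simpa [Subtype.ext_iff] using h
  · simp [List.map_map, Function.comp_def]

lemma arith_pos {q y : ℤ} (h : |1 * q - y| ≤ 1) : |q - y| ≤ 3 := by
  rw [one_mul] at h; omega

lemma arith_neg {q y r : ℤ} (h : |-1 * q - y| ≤ 1) (h2 : |-y - r| ≤ 1) :
    |q - (if |r| = 1 then 0 else r)| ≤ 3 := by
  rw [abs_le] at *
  split_ifs with h3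
  · rcases abs_eq (by norm_num : (0:ℤ) ≤ 1) |>.1 h3 with h | h <;> constructor <;> omega
  · constructor <;> omega

lemma arith_supp {r : ℤ} (h2 : |-0 - r| ≤ 1) : (if |r| = 1 then 0 else r) = 0 := by
  rw [abs_le] at h2
  split_ifs with h3
  · rfl
  · have h4 : r ≠ 1 := by rintro rfl; simp at h3
    have h5 : r ≠ -1 := by rintro rfl; simp at h3
    omega

/-- if `U` is an `S`-closed `𝒰`-tree with stem `∅`, then there is an
infinite block sequence `P` with `⟨P⟩_{±k}^[∞] ⊆ ([U])₃`. -/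
theorem S_closed_UTree_approx (k : ℕ) (hk : 1 ≤ k) (𝒰 : Ultrafilter (ℕ → ℤ))
    (h𝒰 : IsGowersUF k 𝒰) (U : Set (List (ℕ → ℤ))) (hU : IsUTree k 𝒰 U [])
    (hS : ∀ (t : List (ℕ → ℤ)) (p : ℕ → ℤ), t ++ [p] ∈ U → t ++ [Sop p] ∈ U) :
    ∃ P : ℕ → ℕ → ℤ, IsBlockSeq k P ∧
      ∀ Q : ℕ → ℕ → ℤ, IsBlockSeq k Q → (∀ n, InSpanPM k P (Q n)) →
        ∃ R ∈ Branches U, ∀ n, normLe (Q n - R n) 3 := by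
  classical
  obtain ⟨⟨hfin, hcof⟩, hsub, hid⟩ := h𝒰
  have hne : ∀ p, IsFin k p → ∃ n, |p n| = (k : ℤ) ∧ p n ≠ 0 := by
    rintro p ⟨-, -, n, hn⟩
    refine ⟨n, hn, ?_⟩
    intro h; rw [h] at hn; simp at hn; omega
  -- the large sets attached to nodes of the tree
  let B : List (ℕ → ℤ) → Set (ℕ → ℤ) := fun t =>
    {p | t ++ [p] ∈ U ∧ -p ∈ approx 1 {p | t ++ [p] ∈ U}}
  have hB : ∀ t ∈ U, B t ∈ 𝒰 := fun t ht =>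
    Filter.inter_mem (hU.branch t ht (List.nil_prefix)) (hsub _ (hU.branch t ht (List.nil_prefix)))
  let F : (ℕ → ℤ) → Set (List (ℕ → ℤ)) := fun p =>
    {t | t ∈ U ∧ ∀ s ∈ t, ∀ x, s x ≠ 0 → ∃ z, p z ≠ 0 ∧ x ≤ z}
  have hF : ∀ p, IsFin k p → (F p).Finite := by
    intro p hp
    obtain ⟨M, hM⟩ := hp.1.bddAbove
    refine (finite_lists k hk (Set.Iic M) (Set.finite_Iic M)).subset ?_
    rintro t ⟨htU, ht⟩
    refine ⟨hU.blocks t htU, fun s hs x hx => ?_⟩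
    obtain ⟨z, hz, hxz⟩ := ht s hs x hx
    exact hxz.trans (hM hz)
  let step : Set (ℕ → ℤ) → (ℕ → ℤ) → Set (ℕ → ℤ) := fun A p =>
    A ∩ {q | BlockLt p q ∧ ∀ l ≤ k, negT^[l] p + q ∈ A ∧ p + negT^[l] q ∈ A} ∩
      {q | ∀ t ∈ F p, q ∈ B t}
  have hstep : ∀ A ∈ 𝒰, ∃ p ∈ A, IsFin k p ∧ step A p ∈ 𝒰 := by
    intro A hA
    have e1 : ∀ᶠ p in (𝒰 : Filter (ℕ → ℤ)), ∀ l ∈ Set.Iic k,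
        ∀ᶠ q in (𝒰 : Filter (ℕ → ℤ)), BlockLt p (negT^[l] q) ∧ p + negT^[l] q ∈ A :=
      (Filter.eventually_all_finite (Set.finite_Iic k)).2
        (fun l hl => ((hid l hl A).1.2 hA))
    have e2 : ∀ᶠ p in (𝒰 : Filter (ℕ → ℤ)), ∀ l ∈ Set.Iic k,
        ∀ᶠ q in (𝒰 : Filter (ℕ → ℤ)), BlockLt (negT^[l] p) q ∧ negT^[l] p + q ∈ A :=
      (Filter.eventually_all_finite (Set.finite_Iic k)).2
        (fun l hl => ((hid l hl A).2.2 hA))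
    have e3 : ∀ᶠ p in (𝒰 : Filter (ℕ → ℤ)), p ∈ A := hA
    have e4 : ∀ᶠ p in (𝒰 : Filter (ℕ → ℤ)), IsFin k p := hfin
    obtain ⟨p, h1, h2, h3, h4⟩ := (e1.and (e2.and (e3.and e4))).exists
    refine ⟨p, h3, h4, ?_⟩
    have f1 := (Filter.eventually_all_finite (Set.finite_Iic k)).2 h1
    have f2 := (Filter.eventually_all_finite (Set.finite_Iic k)).2 h2
    have f3 : ∀ᶠ q in (𝒰 : Filter (ℕ → ℤ)), ∀ t ∈ F p, q ∈ B t :=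
      (Filter.eventually_all_finite (hF p h4)).2 (fun t ht => hB t ht.1)
    filter_upwards [f1, f2, f3, hA] with q g1 g2 g3 g4
    exact ⟨⟨g4, (g1 0 (Nat.zero_le k)).1, fun l hl => ⟨(g2 l hl).2, (g1 l hl).2⟩⟩, g3⟩
  choose! g hgA hgF hgS using hstep
  let A : ℕ → Set (ℕ → ℤ) := fun n => Nat.rec (B []) (fun _ X => step X (g X)) n
  have hAs : ∀ n, A (n+1) = step (A n) (g (A n)) := fun n => rfl
  have hA : ∀ n, A n ∈ 𝒰 := by
    intro n
    induction n with
    | zero => exact hB [] hU.stemMem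
    | succ n ih => rw [hAs]; exact hgS _ ih
  obtain ⟨P, hPd⟩ : ∃ P : ℕ → ℕ → ℤ, ∀ n, P n = g (A n) := ⟨_, fun n => rfl⟩
  have hanti : Antitone A := antitone_nat_of_succ_le (fun n => by
    rw [hAs]; exact fun q hq => hq.1.1)
  have hPA : ∀ n, P n ∈ A n := fun n => by rw [hPd]; exact hgA _ (hA n)
  have hAB : ∀ n, ∀ q ∈ A (n+1), BlockLt (P n) q ∧
      (∀ l ≤ k, negT^[l] (P n) + q ∈ A n ∧ P n + negT^[l] q ∈ A n) ∧ ∀ t ∈ F (P n), q ∈ B t := by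
    intro n q hq
    rw [hAs, ← hPd] at hq
    exact ⟨hq.1.2.1, hq.1.2.2, hq.2⟩
  have hPfin : ∀ n, IsFin k (P n) := fun n => by rw [hPd]; exact hgF _ (hA n)
  have hPlt : ∀ m n, m < n → BlockLt (P m) (P n) := fun m n hmn =>
    (hAB m _ (hanti hmn (hPA n))).1
  refine ⟨P, ⟨hPfin, hPlt⟩, ?_⟩
  -- owner index
  have hidx : ∀ x, ∃ i, ∀ m, P m x ≠ 0 → m = i := by
    intro x
    by_cases h : ∃ i, P i x ≠ 0
    · obtain ⟨i, hi⟩ := h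
      refine ⟨i, fun m hm => ?_⟩
      rcases lt_trichotomy m i with h | h | h
      · exact absurd (hPlt _ _ h x x hm hi) (lt_irrefl _)
      · exact h
      · exact absurd (hPlt _ _ h x x hi hm) (lt_irrefl _)
    · exact ⟨0, fun m hm => absurd ⟨m, hm⟩ h⟩
  choose idx hidx using hidx
  obtain ⟨v, hvd⟩ : ∃ v : ℕ → ℤ, ∀ x, v x = P (idx x) x := ⟨_, fun x => rfl⟩
  have hv : ∀ x, |v x| ≤ k := fun x => by rw [hvd]; exact (hPfin _).2.1 x
  have hP : ∀ m x, P m x = if idx x = m then v x else 0 := by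
    intro m x
    split_ifs with h
    · rw [hvd, h]
    · by_contra h'; exact h (hidx x m h').symm
  intro Q hQ hQP
  have hrep := fun n => span_rep k hk P idx v hP hv (Q n) (hQP n)
  choose a d ε j hε hj hj2 hja hj0 hq using hrep
  -- a point of maximal absolute value of a used block is in the support
  have hpt : ∀ n m z, j n m < k → |P m z| = (k : ℤ) → Q n z ≠ 0 := by
    intro n m z hjm hz
    have hz0 : P m z ≠ 0 := by intro h; rw [h] at hz; simp at hz; omega
    have hi := hidx z m hz0
    rw [hq, ← hi]
    have hvz : v z = P m z := by rw [hvd, ← hi]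
    have : tau^[j n m] (v z) ≠ 0 := by
      have h := abs_tau_iter (j n m) (v z)
      rw [hvz, hz] at h
      rw [hvz]
      intro h0; rw [h0] at h
      simp at h; omega
    rcases hε n m with e | e <;> rw [e] <;> simpa using this
  have hused : ∀ n x, Q n x ≠ 0 → j n (idx x) < k ∧ P (idx x) x ≠ 0 := by
    intro n x hx
    rw [hq] at hx
    constructor
    · refine lt_of_le_of_ne (hj _ _) fun h => hx ?_
      rw [h, tau_top (hv x), mul_zero]
    · rw [← hvd]; intro h; apply hx
      rw [h, (show IsFixedPt tau 0 from rfl).iterate, mul_zero]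
  have hlow : ∀ i n x, i < n → Q i x ≠ 0 → idx x < a n := by
    intro i n x hin hx
    obtain ⟨h1, h2⟩ := hused i x hx
    by_contra hcon
    obtain ⟨z, hz, hz0⟩ := hne _ (hPfin (a n))
    have hQz := hpt n (a n) z (hja n) hz
    rcases (not_lt.1 hcon).eq_or_lt with h | h
    · exact lt_irrefl _ (hQ.2 i n hin z z (hpt i (a n) z (h ▸ h1) hz) hQz)
    · exact lt_asymm (hQ.2 i n hin x z hx hQz) (hPlt _ _ h z x hz0 h2)
  -- one step of the branch
  have hnext : ∀ n (t : List (ℕ → ℤ)), t ∈ U → (∀ s ∈ t, ∀ x, s x ≠ 0 → ∃ i < n, Q i x ≠ 0) →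
      ∃ r, t ++ [r] ∈ U ∧ normLe (Q n - r) 3 ∧ ∀ x, r x ≠ 0 → Q n x ≠ 0 := by
    intro n t htU ht
    have hAt : A (a n) ⊆ B t := by
      rcases Nat.eq_zero_or_pos (a n) with h0 | hpos
      · have : t = [] := by
          rw [List.eq_nil_iff_forall_not_mem]
          intro s hs
          obtain ⟨x, -, hx⟩ := hne s ((hU.blocks t htU).1 s hs)
          obtain ⟨i, hin, hix⟩ := ht s hs x hx
          have := hlow i n x hin hix
          omega
        rw [h0, this]
        exact fun q hq => hq
      · obtain ⟨N, hN⟩ : ∃ N, a n = N + 1 := ⟨a n - 1, by omega⟩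
        rw [hN]
        intro q hq
        refine (hAB N q hq).2.2 t ⟨htU, fun s hs x hx => ?_⟩
        obtain ⟨i, hin, hix⟩ := ht s hs x hx
        have h1 := hlow i n x hin hix
        obtain ⟨-, h2⟩ := hused i x hix
        rcases (show idx x ≤ N by omega).eq_or_lt with h | h
        · exact ⟨x, h ▸ h2, le_rfl⟩
        · obtain ⟨z, -, hz⟩ := hne _ (hPfin N)
          exact ⟨z, hz, (hPlt _ _ h x z h2 hz).le⟩
    obtain ⟨m0, hm0⟩ := hj0 n
    have hδ := hε n m0
    set δ := ε n m0 with hδd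
    choose j' hj'k hjj' hj'0 hj'a using
      fun m => approx_term k (ε n m) δ (hε n m) hδ (j n m) (hj n m)
    have hy : blockComb idx v j' ∈ A (a n) := by
      refine comp_mem k hk P idx v hP hv A hPA (fun n y hy => (hAB n y hy).2.1) (d n) (a n) j'
        hj'k ?_ ⟨m0, hj'0 m0 hm0 rfl⟩
      intro m hm
      have h1 := hj2 n m hm
      have h2 := hjj' m
      have h3 := hj'k m
      omega
    have hyq : ∀ x, |δ * Q n x - blockComb idx v j' x| ≤ 1 := fun x => by
      rw [hq]; exact (hj'a (idx x) (v x) (hv x)).1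
    have hys : ∀ x, Q n x = 0 → blockComb idx v j' x = 0 := fun x hx => by
      rw [hq] at hx; exact (hj'a (idx x) (v x) (hv x)).2 hx
    generalize blockComb idx v j' = y at hy hyq hys
    obtain ⟨hyU, r, hrU, hr⟩ := hAt hy
    rcases hδ with e | e
    · refine ⟨y, hyU, fun x => ?_, fun x hx h => hx (hys x h)⟩
      have h1 := hyq x
      rw [e] at h1
      exact arith_pos h1
    · refine ⟨Sop r, hS t r hrU, fun x => ?_, fun x hx h => ?_⟩
      · have h1 := hyq x
        have h2 : |-(y x) - r x| ≤ 1 := hr x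
        rw [e] at h1
        exact arith_neg h1 h2
      · have h1 := hys x h
        have h2 : |-(y x) - r x| ≤ 1 := hr x
        rw [h1] at h2
        exact hx (arith_supp h2)
  choose! f hfU hfn hfs using hnext
  let t : ℕ → List (ℕ → ℤ) := fun n => Nat.rec [] (fun n l => l ++ [f n l]) n
  have hts : ∀ n, t (n+1) = t n ++ [f n (t n)] := fun n => rfl
  have ht : ∀ n, t n ∈ U ∧ ∀ s ∈ t n, ∀ x, s x ≠ 0 → ∃ i < n, Q i x ≠ 0 := by
    intro n
    induction n with
    | zero => exact ⟨hU.stemMem, fun s hs => absurd hs (List.not_mem_nil)⟩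
    | succ n ih =>
      rw [hts]
      refine ⟨hfU n _ ih.1 ih.2, fun s hs x hx => ?_⟩
      rcases List.mem_append.1 hs with h | h
      · obtain ⟨i, hi, hix⟩ := ih.2 s h x hx
        exact ⟨i, by omega, hix⟩
      · rw [List.mem_singleton] at h
        subst h
        exact ⟨n, by omega, hfs n _ ih.1 ih.2 x hx⟩
  refine ⟨fun n => f n (t n), fun n => ?_, fun n => hfn n _ (ht n).1 (ht n).2⟩
  have : (List.ofFn fun i : Fin n => f i.1 (t i.1)) = t n := by
    induction n with
    | zero => rfl
    | succ n ih =>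
      rw [List.ofFn_succ_last, hts]
      exact congrArg (fun l => l ++ [f n (t n)]) ih
  rw [this]; exact (ht n).1
end

section
/- For each m ∈ ℕ, m ≥ 1, the map Φ_m : FIN_{±2m} → FIN_{±m} is a surjective homomorphism of partial semigroups (i.e. it is surjective, and Φ_m(p + q) = Φ_m(p) + Φ_m(q) whenever p < q in FIN_{±2m}) which moreover satisfies Φ_m(−p) = −Φ_m(p) for every p ∈ FIN_{±2m}. -/
open Function Set

/-- `Φ_m : FIN_{±2m} → FIN_{±m}` is a surjective homomorphism of partial
semigroups satisfying `Φ_m(−p) = −Φ_m(p)`. -/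
theorem Phi_surjective_homomorphism (m : ℕ) (hm : 1 ≤ m) :
    (∀ p : ℕ → ℤ, IsFin (2 * m) p → IsFin m (Phi p)) ∧
    (∀ q : ℕ → ℤ, IsFin m q → ∃ p : ℕ → ℤ, IsFin (2 * m) p ∧ Phi p = q) ∧
    (∀ p q : ℕ → ℤ, IsFin (2 * m) p → IsFin (2 * m) q → BlockLt p q →
      Phi (p + q) = Phi p + Phi q) ∧
    (∀ p : ℕ → ℤ, IsFin (2 * m) p → Phi (-p) = -Phi p) := by
  refine ⟨?_, ?_, ?_, ?_⟩
  · rintro p ⟨hf, hb, n, hn⟩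
    refine ⟨hf.subset ?_, ?_, n, ?_⟩
    · intro i hi hp
      apply hi
      simp [Phi, hp]
    · intro i
      have h := hb i
      push_cast at h
      rw [abs_le] at h ⊢
      simp only [Phi]
      split_ifs <;> omega
    · push_cast at hn
      rw [abs_eq (by positivity)] at hn ⊢
      simp only [Phi]
      split_ifs <;> omega
  · rintro q ⟨hf, hb, n, hn⟩
    refine ⟨fun i => 2 * q i, ⟨hf.subset ?_, ?_, n, ?_⟩, ?_⟩
    · intro i hi hq
      apply hi
      simp [hq]
    · intro i
      have h := hb i
      push_cast
      rw [abs_mul, abs_two]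
      omega
    · push_cast
      rw [abs_mul, abs_two, hn]
    · funext i
      simp [Phi]
  · intro p q _ _ h
    funext i
    have h0 : p i = 0 ∨ q i = 0 := by
      by_contra hc
      rw [not_or] at hc
      exact lt_irrefl _ (h i i hc.1 hc.2)
    rcases h0 with h0 | h0 <;> simp [Phi, h0]
  · intro p _
    funext i
    simp only [Phi, Pi.neg_apply]
    split_ifs <;> omega
end

section
/- For each m ∈ ℕ, m ≥ 1, for every p₀ < p₁ in FIN_{±2m} and all j₀, j₁ with 0 ≤ j₀, j₁ ≤ k and min{j₀, j₁} = 0 (where k is such that the indicated iterated tetris images are defined), one has Φ_m(T^{2j₀}(p₀) + T^{2j₁}(p₁)) = T^{j₀}(Φ_m(p₀)) + T^{j₁}(Φ_m(p₁)). -/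
open Function Set

theorem Phi_tetris_two (p : ℕ → ℤ) : Phi (tetris (tetris p)) = tetris (Phi p) := by
  funext n
  simp only [Phi, tetris]
  split_ifs <;> omega

theorem Phi_tetris_iter (j : ℕ) (p : ℕ → ℤ) :
    Phi (tetris^[2 * j] p) = tetris^[j] (Phi p) := by
  induction j generalizing p with
  | zero => rfl
  | succ j ih =>
    rw [show 2 * (j + 1) = 2 * j + 1 + 1 by ring, Function.iterate_succ_apply,
      Function.iterate_succ_apply, ih, Phi_tetris_two, Function.iterate_succ_apply]

theorem tetris_iter_zero (j : ℕ) (p : ℕ → ℤ) (n : ℕ) (h : p n = 0) :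
    (tetris^[j] p) n = 0 := by
  induction j generalizing p with
  | zero => exact h
  | succ j ih =>
    rw [Function.iterate_succ_apply]
    exact ih _ (by simp [tetris, h])

theorem Phi_add_disjoint (p q : ℕ → ℤ) (h : ∀ n, p n = 0 ∨ q n = 0) :
    Phi (p + q) = Phi p + Phi q := by
  funext n
  rcases h n with h | h <;> simp [Phi, h]

/-- for `p₀ < p₁` in `FIN_{±2m}` and `j₀, j₁` with `min{j₀, j₁} = 0`
(in the range where the iterated tetris images are defined),
`Φ_m(T^{2j₀}(p₀) + T^{2j₁}(p₁)) = T^{j₀}(Φ_m(p₀)) + T^{j₁}(Φ_m(p₁))`. -/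
theorem Phi_tetris_compat (m : ℕ) (hm : 1 ≤ m) (p₀ p₁ : ℕ → ℤ)
    (h₀ : IsFin (2 * m) p₀) (h₁ : IsFin (2 * m) p₁) (hlt : BlockLt p₀ p₁)
    (j₀ j₁ : ℕ) (hj₀ : j₀ ≤ m) (hj₁ : j₁ ≤ m) (hmin : j₀ = 0 ∨ j₁ = 0) :
    Phi (tetris^[2 * j₀] p₀ + tetris^[2 * j₁] p₁) =
      tetris^[j₀] (Phi p₀) + tetris^[j₁] (Phi p₁) := by
  rw [← Phi_tetris_iter, ← Phi_tetris_iter]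
  apply Phi_add_disjoint
  intro n
  by_cases h : p₀ n = 0
  · exact Or.inl (tetris_iter_zero _ _ _ h)
  · by_cases h' : p₁ n = 0
    · exact Or.inr (tetris_iter_zero _ _ _ h')
    · exact absurd (hlt n n h h') (lt_irrefl n)
end

section
/- Fix k ∈ ℕ, k ≥ 1, and let Ψ := Φ_k ∘ Φ_{2k} : FIN_{±4k} → FIN_{±k}. Then Ψ is a surjective homomorphism of partial semigroups satisfying: (a) for every p₀ < p₁ in FIN_{±4k} and all j₀, j₁ ≤ k with min{j₀, j₁} = 0, Ψ(T^{4j₀}(p₀) + T^{4j₁}(p₁)) = T^{j₀}(Ψ(p₀)) + T^{j₁}(Ψ(p₁)); and (b) for all p₀, p₁ ∈ FIN_{±4k}, if ‖p₀ − p₁‖ ≤ 4 then ‖Ψ(p₀) − Ψ(p₁)‖ ≤ 1. -/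
open Function Set

theorem Psi_spec (p : ℕ → ℤ) (n : ℕ) :
    (0 ≤ p n → 4 * Psi p n ≤ p n ∧ p n < 4 * Psi p n + 4) ∧
    (p n ≤ 0 → p n ≤ 4 * Psi p n ∧ 4 * Psi p n - 4 < p n) := by
  simp only [Psi, Phi]
  split_ifs <;> omega

theorem tetris_spec (j : ℕ) : ∀ (p : ℕ → ℤ) (n : ℕ),
    (tetris^[j] p) n = if (j : ℤ) ≤ p n then p n - j else if p n ≤ -(j : ℤ) then p n + j else 0 := by
  induction j with
  | zero => intro p n; simp; omega
  | succ j ih =>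
    intro p n
    rw [Function.iterate_succ_apply, ih]
    simp only [tetris]
    push_cast
    split_ifs <;> omega

theorem blockLt_zero {p q : ℕ → ℤ} (h : BlockLt p q) (n : ℕ) : p n = 0 ∨ q n = 0 := by
  by_contra hc
  push Not at hc
  exact lt_irrefl n (h n n hc.1 hc.2)

/-- `Ψ = Φ_k ∘ Φ_{2k} : FIN_{±4k} → FIN_{±k}` is a surjective
homomorphism of partial semigroups satisfying properties (a) and (b). -/
theorem Psi_properties (k : ℕ) (hk : 1 ≤ k) :
    (∀ p : ℕ → ℤ, IsFin (4 * k) p → IsFin k (Psi p)) ∧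
    (∀ q : ℕ → ℤ, IsFin k q → ∃ p : ℕ → ℤ, IsFin (4 * k) p ∧ Psi p = q) ∧
    (∀ p q : ℕ → ℤ, IsFin (4 * k) p → IsFin (4 * k) q → BlockLt p q →
      Psi (p + q) = Psi p + Psi q) ∧
    (∀ p₀ p₁ : ℕ → ℤ, IsFin (4 * k) p₀ → IsFin (4 * k) p₁ → BlockLt p₀ p₁ →
      ∀ j₀ j₁ : ℕ, j₀ ≤ k → j₁ ≤ k → (j₀ = 0 ∨ j₁ = 0) →
        Psi (tetris^[4 * j₀] p₀ + tetris^[4 * j₁] p₁) =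
          tetris^[j₀] (Psi p₀) + tetris^[j₁] (Psi p₁)) ∧
    (∀ p₀ p₁ : ℕ → ℤ, IsFin (4 * k) p₀ → IsFin (4 * k) p₁ →
      normLe (p₀ - p₁) 4 → normLe (Psi p₀ - Psi p₁) 1) := by
  refine ⟨?_, ?_, ?_, ?_, ?_⟩
  · rintro p ⟨hf, hb, m, hm⟩
    refine ⟨hf.subset ?_, ?_, m, ?_⟩
    · intro n hn h0
      apply hn
      have := Psi_spec p n
      omega
    · intro n
      have h1 := Psi_spec p n
      have h2 := abs_le.1 (hb n)
      push_cast at h2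
      exact abs_le.2 (by omega)
    · have h1 := Psi_spec p m
      push_cast at hm
      have h4 : (0 : ℤ) ≤ 4 * (k : ℤ) := by omega
      rw [abs_eq h4] at hm
      rw [abs_eq (by omega)]
      omega
  · rintro q ⟨hf, hb, m, hm⟩
    refine ⟨fun n => 4 * q n, ⟨hf.subset ?_, ?_, m, ?_⟩, ?_⟩
    · intro n hn h0
      apply hn
      simp [h0]
    · intro n
      have h2 := abs_le.1 (hb n)
      push_cast
      exact abs_le.2 (by omega)
    · push_cast
      rw [abs_mul, hm]
      norm_num
    · funext n
      have h1 := Psi_spec (fun n => 4 * q n) n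
      omega
  · intro p q _ _ hlt
    funext n
    have h := blockLt_zero hlt n
    have h1 := Psi_spec p n
    have h2 := Psi_spec q n
    have h3 := Psi_spec (p + q) n
    simp only [Pi.add_apply] at h3 ⊢
    omega
  · intro p q _ _ hlt i j _ _ _
    funext n
    have h := blockLt_zero hlt n
    have h1 := Psi_spec p n
    have h2 := Psi_spec q n
    have h3 := Psi_spec (tetris^[4 * i] p + tetris^[4 * j] q) n
    simp only [Pi.add_apply, tetris_spec] at h3 ⊢
    push_cast at h3
    generalize Psi (tetris^[4 * i] p + tetris^[4 * j] q) n = z at *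
    generalize Psi p n = x at *
    generalize Psi q n = y at *
    generalize p n = a at *
    generalize q n = b at *
    rcases h with rfl | rfl
    · have hx : x = 0 := by omega
      subst hx
      have e1 : (if (4 * (i : ℤ)) ≤ 0 then 0 - 4 * (i : ℤ) else
        if 0 ≤ -(4 * (i : ℤ)) then 0 + 4 * (i : ℤ) else 0) = 0 := by split_ifs <;> omega
      have e2 : (if (i : ℤ) ≤ 0 then 0 - (i : ℤ) else
        if 0 ≤ -(i : ℤ) then 0 + (i : ℤ) else 0) = 0 := by split_ifs <;> omega
      rw [e1] at h3
      rw [e2]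
      split_ifs at h3 ⊢ <;> omega
    · have hy : y = 0 := by omega
      subst hy
      have e1 : (if (4 * (j : ℤ)) ≤ 0 then 0 - 4 * (j : ℤ) else
        if 0 ≤ -(4 * (j : ℤ)) then 0 + 4 * (j : ℤ) else 0) = 0 := by split_ifs <;> omega
      have e2 : (if (j : ℤ) ≤ 0 then 0 - (j : ℤ) else
        if 0 ≤ -(j : ℤ) then 0 + (j : ℤ) else 0) = 0 := by split_ifs <;> omega
      rw [e1] at h3
      rw [e2]
      split_ifs at h3 ⊢ <;> omega
  · intro p q _ _ h n
    have h0 := abs_le.1 (h n)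
    have h1 := Psi_spec p n
    have h2 := Psi_spec q n
    simp only [Pi.sub_apply] at h0 ⊢
    push_cast at h0 ⊢
    exact abs_le.2 (by omega)
end
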